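/- arXiv:1706.06686 — 2 statements merged into one kernel-verified Lean document; each statement's English description precedes it below -/
import Mathlib

section
/- Let F > 0 and λ = Λ(A,B,F). Then the fiber map φ_λ has exactly one critical point in (0,∞), located at t⁰ = T(A,F); at this point φ_λ''(t⁰) = 0, and φ_λ is strictly decreasing on (0,∞). -/
/-!
For `t > 0` the derivative factors as `φ_λ'(t) = t^(q-1) (A t^(p-q) − λB − F t^(γ-q))`. With
`T = T(A,F)` one has `F T^(γ-p) = (p-q)A/(γ-q)` (`F_mul_Tcrit_rpow`), and `λ = Λ(A,B,F)` means
`λB = (γ-p)/(γ-q) · A T^(p-q)` (`Lam_mul_B`), so `φ_λ'(T) = φ_λ''(T) = 0` by direct computation.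
In the variable `u = (t/T)^(p-q)` the bracket is a positive multiple of `1 + r(u-1) − u^r` with
`r = (γ-q)/(p-q) > 1`, which by the strict Bernoulli inequality is negative unless `u = 1`
(`deriv_phi_neg`). Thus `T` is the only critical point, and `φ_λ` is strictly decreasing on each
of `(0,T]` and `[T,∞)`, hence on their union.
-/

open Real Filter Topology Set

/-- The fiber map `φ_λ(t) = (A/p) t^p − (λB/q) t^q − (F/γ) t^γ`. -/
noncomputable def phi (p q γ A B F lam : ℝ) : ℝ → ℝ :=
  fun t => A / p * t ^ p - lam * B / q * t ^ q - F / γ * t ^ γ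

/-- The extremal value `Λ(A,B,F)`. -/
noncomputable def Lam (p q γ A B F : ℝ) : ℝ :=
  (γ - p) / (γ - q) * ((p - q) / (γ - q)) ^ ((p - q) / (γ - p)) *
    A ^ ((γ - q) / (γ - p)) / (B * F ^ ((p - q) / (γ - p)))

/-- The degenerate critical point `T(A,F)`. -/
noncomputable def Tcrit (p q γ A F : ℝ) : ℝ :=
  ((p - q) * A / ((γ - q) * F)) ^ (1 / (γ - p))

lemma hasDerivAt_phi {p q γ : ℝ} (A B F lam : ℝ) (hp : p ≠ 0) (hq : q ≠ 0) (hγ : γ ≠ 0)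
    {t : ℝ} (ht : 0 < t) :
    HasDerivAt (phi p q γ A B F lam)
      (A * t ^ (p - 1) - lam * B * t ^ (q - 1) - F * t ^ (γ - 1)) t := by
  have h (r : ℝ) := Real.hasDerivAt_rpow_const (x := t) (p := r) (Or.inl ht.ne')
  have := (((h p).const_mul (A / p)).sub ((h q).const_mul (lam * B / q))).sub
    ((h γ).const_mul (F / γ))
  refine HasDerivAt.congr_deriv this ?_
  field_simp

lemma deriv_deriv_phi {p q γ : ℝ} (A B F lam : ℝ) (hp : p ≠ 0) (hq : q ≠ 0) (hγ : γ ≠ 0)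
    {t : ℝ} (ht : 0 < t) :
    deriv (deriv (phi p q γ A B F lam)) t =
      A * ((p - 1) * t ^ (p - 2)) - lam * B * ((q - 1) * t ^ (q - 2))
        - F * ((γ - 1) * t ^ (γ - 2)) := by
  have heq : deriv (phi p q γ A B F lam) =ᶠ[𝓝 t]
      fun t => A * t ^ (p - 1) - lam * B * t ^ (q - 1) - F * t ^ (γ - 1) := by
    filter_upwards [Ioi_mem_nhds ht] with s hs
    exact (hasDerivAt_phi A B F lam hp hq hγ hs).deriv
  rw [heq.deriv_eq]
  have h (r : ℝ) : HasDerivAt (fun t : ℝ => t ^ (r - 1)) ((r - 1) * t ^ (r - 2)) t := by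
    convert Real.hasDerivAt_rpow_const (x := t) (p := r - 1) (Or.inl ht.ne') using 3
    ring
  exact ((((h p).const_mul A).sub ((h q).const_mul (lam * B))).sub ((h γ).const_mul F)).deriv

lemma Tcrit_pos {p q γ A F : ℝ} (hqp : q < p) (hpγ : p < γ) (hA : 0 < A) (hF : 0 < F) :
    0 < Tcrit p q γ A F := by
  have h1 : 0 < p - q := sub_pos.2 hqp
  have h2 : 0 < γ - q := by linarith
  unfold Tcrit
  positivity

lemma F_mul_Tcrit_rpow {p q γ A F : ℝ} (hqp : q < p) (hpγ : p < γ) (hA : 0 < A) (hF : 0 < F) :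
    F * Tcrit p q γ A F ^ (γ - p) = (p - q) * A / (γ - q) := by
  have h1 : 0 < p - q := sub_pos.2 hqp
  have h2 : 0 < γ - q := by linarith
  have h3 : 0 < γ - p := by linarith
  unfold Tcrit
  rw [← Real.rpow_mul (by positivity), one_div_mul_cancel h3.ne', Real.rpow_one]
  field_simp

lemma Lam_mul_B {p q γ A B F : ℝ} (hqp : q < p) (hpγ : p < γ) (hA : 0 < A) (hB : 0 < B)
    (hF : 0 < F) :
    Lam p q γ A B F * B = (γ - p) / (γ - q) * (A * Tcrit p q γ A F ^ (p - q)) := by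
  have h1 : 0 < p - q := sub_pos.2 hqp
  have h2 : 0 < γ - q := by linarith
  have h3 : 0 < γ - p := by linarith
  have hT : Tcrit p q γ A F ^ (p - q) = ((p - q) / (γ - q)) ^ ((p - q) / (γ - p)) *
      A ^ ((p - q) / (γ - p)) / F ^ ((p - q) / (γ - p)) := by
    unfold Tcrit
    rw [← Real.rpow_mul (by positivity), ← Real.mul_rpow (by positivity) hA.le,
      ← Real.div_rpow (by positivity) hF.le]
    congr 1 <;> field_simp
  have hA' : A ^ ((γ - q) / (γ - p)) = A * A ^ ((p - q) / (γ - p)) := by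
    rw [← Real.rpow_one_add' hA.le (by positivity)]
    congr 1
    field_simp
    ring
  have hFpos : 0 < F ^ ((p - q) / (γ - p)) := by positivity
  unfold Lam
  rw [hT, hA']
  field_simp

/-- Strict negativity of `φ_λ'` off `T`: Bernoulli's inequality for `u = (t/T)^(p-q)` with
exponent `(γ-q)/(p-q) > 1`. -/
lemma deriv_phi_neg {p q γ A B F : ℝ} (hq : 1 < q) (hqp : q < p) (hpγ : p < γ)
    (hA : 0 < A) (hB : 0 < B) (hF : 0 < F) {t : ℝ} (ht : 0 < t) (htT : t ≠ Tcrit p q γ A F) :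
    deriv (phi p q γ A B F (Lam p q γ A B F)) t < 0 := by
  rw [(hasDerivAt_phi A B F _ (by linarith) (by linarith) (by linarith) ht).deriv,
    Lam_mul_B hqp hpγ hA hB hF]
  have hT := Tcrit_pos hqp hpγ hA hF
  have hFT := F_mul_Tcrit_rpow hqp hpγ hA hF
  set T := Tcrit p q γ A F
  have h1 : 0 < p - q := sub_pos.2 hqp
  have h2 : 0 < γ - q := by linarith
  have hs : 0 < t / T := div_pos ht hT
  have hs1 : t / T ≠ 1 := fun h => htT ((div_eq_one_iff_eq hT.ne').1 h)
  have hu : 0 < (t / T) ^ (p - q) := by positivity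
  have hu1 : (t / T) ^ (p - q) ≠ 1 := by
    rwa [← Real.one_rpow (p - q), Ne, Real.rpow_left_inj hs.le zero_le_one h1.ne']
  have bern := one_add_mul_self_lt_rpow_one_add (s := (t / T) ^ (p - q) - 1) (by linarith)
    (sub_ne_zero.2 hu1) (p := (γ - q) / (p - q)) (by rw [one_lt_div h1]; linarith)
  rw [add_sub_cancel, ← Real.rpow_mul hs.le, mul_div_cancel₀ _ h1.ne'] at bern
  have e1 : t ^ (p - 1) = t ^ (q - 1) * (T ^ (p - q) * (t / T) ^ (p - q)) := by
    rw [← Real.mul_rpow hT.le hs.le, mul_div_cancel₀ _ hT.ne', ← Real.rpow_add ht]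
    congr 1; ring
  have e2 : t ^ (γ - 1) = t ^ (q - 1) * (T ^ (p - q) * T ^ (γ - p) * (t / T) ^ (γ - q)) := by
    rw [← Real.rpow_add hT, show p - q + (γ - p) = γ - q by ring,
      ← Real.mul_rpow hT.le hs.le, mul_div_cancel₀ _ hT.ne', ← Real.rpow_add ht]
    congr 1; ring
  have hk : 0 < t ^ (q - 1) * T ^ (p - q) * A * ((p - q) / (γ - q)) := by positivity
  have key := mul_pos hk (sub_pos.2 bern)
  have hFT' : F = (p - q) * A / (γ - q) / T ^ (γ - p) := by
    rw [← hFT]; field_simp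
  rw [e1, e2, hFT', ← neg_pos]
  refine key.trans_eq ?_
  field_simp
  ring

/-- for `F > 0` and `λ = Λ(A,B,F)` the fiber map `φ_λ` has exactly one
critical point in `(0,∞)`, located at `t⁰ = T(A,F)`; there `φ_λ'' = 0`, and `φ_λ` is
strictly decreasing on `(0,∞)`. -/
theorem fiber_map_at_extremal (p q γ A B F : ℝ)
    (hq : 1 < q) (hqp : q < p) (hpγ : p < γ)
    (hA : 0 < A) (hB : 0 < B) (hF : 0 < F) :
    0 < Tcrit p q γ A F ∧
    deriv (phi p q γ A B F (Lam p q γ A B F)) (Tcrit p q γ A F) = 0 ∧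
    (∀ t : ℝ, 0 < t → deriv (phi p q γ A B F (Lam p q γ A B F)) t = 0 →
      t = Tcrit p q γ A F) ∧
    deriv (deriv (phi p q γ A B F (Lam p q γ A B F))) (Tcrit p q γ A F) = 0 ∧
    StrictAntiOn (phi p q γ A B F (Lam p q γ A B F)) (Set.Ioi 0) := by
  have hT := Tcrit_pos hqp hpγ hA hF
  have hFT := F_mul_Tcrit_rpow hqp hpγ hA hF
  have hL := Lam_mul_B hqp hpγ hA hB hF
  have hneg := fun t => deriv_phi_neg (t := t) hq hqp hpγ hA hB hF
  have hp0 : p ≠ 0 := by linarith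
  have hq0 : q ≠ 0 := by linarith
  have hγ0 : γ ≠ 0 := by linarith
  have hc : γ - q ≠ 0 := by linarith
  have hd := fun t => hasDerivAt_phi A B F (Lam p q γ A B F) hp0 hq0 hγ0 (t := t)
  have hdd := deriv_deriv_phi A B F (Lam p q γ A B F) hp0 hq0 hγ0 hT
  set T := Tcrit p q γ A F
  -- Both derivatives at `T` are expressed through the powers `T^(p-q)`, `T^(γ-p)` and `T^(q-k)`.
  have e1 (k : ℝ) : T ^ (p - k) = T ^ (q - k) * T ^ (p - q) := by
    rw [← Real.rpow_add hT]; congr 1; ring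
  have e2 (k : ℝ) : T ^ (γ - k) = T ^ (q - k) * T ^ (p - q) * T ^ (γ - p) := by
    rw [← Real.rpow_add hT, ← Real.rpow_add hT]; congr 1; ring
  refine ⟨hT, ?_, ?_, ?_, ?_⟩
  · have hc1 : 1 - (γ - p) / (γ - q) - (p - q) / (γ - q) = 0 := by
      field_simp
      ring
    rw [(hd T hT).deriv, hL, e1 1, e2 1]
    linear_combination (-(T ^ (q - 1) * T ^ (p - q))) * hFT +
      (T ^ (q - 1) * T ^ (p - q) * A) * hc1
  · intro t ht h0
    by_contra hne
    exact (hneg t ht hne).ne h0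
  · have hc2 :
        (p - 1) - (γ - p) / (γ - q) * (q - 1) - (p - q) / (γ - q) * (γ - 1) = 0 := by
      field_simp
      ring
    rw [hdd, hL, e1 2, e2 2]
    linear_combination (-(T ^ (q - 2) * T ^ (p - q) * (γ - 1))) * hFT +
      (T ^ (q - 2) * T ^ (p - q) * A) * hc2
  · have hleft : StrictAntiOn (phi p q γ A B F (Lam p q γ A B F)) (Ioc 0 T) := by
      refine strictAntiOn_of_deriv_neg (convex_Ioc 0 T)
        (fun t ht => (hd t ht.1).continuousAt.continuousWithinAt) fun t ht => ?_
      rw [interior_Ioc] at ht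
      exact hneg t ht.1 ht.2.ne
    have hright : StrictAntiOn (phi p q γ A B F (Lam p q γ A B F)) (Ici T) := by
      refine strictAntiOn_of_deriv_neg (convex_Ici T)
        (fun t ht => (hd t (hT.trans_le ht)).continuousAt.continuousWithinAt) fun t ht => ?_
      rw [interior_Ici] at ht
      exact hneg t (hT.trans ht) ht.ne'
    rw [← Ioc_union_Ici_eq_Ioi hT]
    exact hleft.union hright (isGreatest_Ioc hT) isLeast_Ici
end

section
/- For each sufficiently small λ > 0 (any λ > 0 when F ≤ 0, and any λ ∈ (0, Λ(A,B,F)) when F > 0), let t⁺_λ denote the smallest critical point of the fiber map φ_λ in (0,∞). Then lim_{λ→0⁺} φ_λ(t⁺_λ) / λ^{p/(p−q)} = (1/p − 1/q) · B^{p/(p−q)} · A^{−q/(p−q)}. -/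
/-!
On `(0,∞)` one has `φ_λ'(t) = t^(q-1) (A t^(p-q) - F t^(γ-q) - λB)`, so the critical points of
`φ_λ` are the solutions of `A t^(p-q) - F t^(γ-q) = λB` (`deriv_phi_eq_zero_iff`). The left-hand
side is continuous, vanishes at `0` and is positive just to the right of `0`, so by the
intermediate value theorem there are arbitrarily small critical points as `λ ↓ 0`
(`exists_small_critical`); hence the smallest one, `t⁺_λ`, tends to `0`.

Solving the critical equation for `λ` and writing `u = (t⁺_λ)^(γ-p)` turns the quotient
`φ_λ(t⁺_λ) / λ^(p/(p-q))` into an explicit function of `u` alone (`phi_div_eq`), continuous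
at `u = 0`, where its value is the claimed limit.
-/

open Real Filter Topology Set

theorem deriv_phi (p q γ A B F lam t : ℝ) (hp : p ≠ 0) (hq : q ≠ 0) (hγ : γ ≠ 0) (ht : 0 < t) :
    deriv (phi p q γ A B F lam) t =
      t ^ (q - 1) * (A * t ^ (p - q) - F * t ^ (γ - q) - lam * B) := by
  have hd (r : ℝ) : HasDerivAt (fun x : ℝ => x ^ r) (r * t ^ (r - 1)) t :=
    Real.hasDerivAt_rpow_const (Or.inl ht.ne')
  have h := (((hd p).const_mul (A / p)).sub ((hd q).const_mul (lam * B / q))).sub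
    ((hd γ).const_mul (F / γ))
  have h1 : t ^ (p - 1) = t ^ (q - 1) * t ^ (p - q) := by
    rw [← Real.rpow_add ht]; congr 1; ring
  have h2 : t ^ (γ - 1) = t ^ (q - 1) * t ^ (γ - q) := by
    rw [← Real.rpow_add ht]; congr 1; ring
  refine (HasDerivAt.deriv (f := phi p q γ A B F lam) h).trans ?_
  rw [h1, h2]
  field_simp
  ring

theorem deriv_phi_eq_zero_iff (p q γ A B F lam t : ℝ) (hp : p ≠ 0) (hq : q ≠ 0) (hγ : γ ≠ 0)
    (ht : 0 < t) :
    deriv (phi p q γ A B F lam) t = 0 ↔ A * t ^ (p - q) - F * t ^ (γ - q) = lam * B := by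
  rw [deriv_phi p q γ A B F lam t hp hq hγ ht, mul_eq_zero_iff_left (Real.rpow_pos_of_pos ht _).ne',
    sub_eq_zero]

theorem tendsto_rpow_nhdsGT_zero {r : ℝ} (hr : 0 < r) :
    Tendsto (fun t : ℝ => t ^ r) (𝓝[>] 0) (𝓝 0) := by
  have h := (Real.continuousAt_rpow_const 0 r (Or.inr hr.le)).tendsto
  rw [Real.zero_rpow hr.ne'] at h
  exact h.mono_left nhdsWithin_le_nhds

/-- The critical equation has solutions below any `ε > 0` once `λ` is small enough. -/
theorem exists_small_critical (p q γ A B F : ℝ) (hqp : q < p) (hpγ : p < γ)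
    (hA : 0 < A) (hB : 0 < B) (ε : ℝ) (hε : 0 < ε) :
    ∀ᶠ lam in 𝓝[>] (0 : ℝ), ∃ t, 0 < t ∧ t < ε ∧
      A * t ^ (p - q) - F * t ^ (γ - q) = lam * B := by
  have hlim : Tendsto (fun t : ℝ => A - F * t ^ (γ - p)) (𝓝[>] 0) (𝓝 (A - F * 0)) :=
    ((tendsto_rpow_nhdsGT_zero (sub_pos.2 hpγ)).const_mul F).const_sub A
  have hpos : ∀ᶠ t in 𝓝[>] (0 : ℝ), 0 < A - F * t ^ (γ - p) :=
    hlim.eventually (lt_mem_nhds (by simpa using hA))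
  obtain ⟨t₀, ht₀, ht₀pos, ht₀ε⟩ := (hpos.and (Ioo_mem_nhdsGT hε)).exists
  have hh : 0 < A * t₀ ^ (p - q) - F * t₀ ^ (γ - q) := by
    have h1 : t₀ ^ (γ - q) = t₀ ^ (p - q) * t₀ ^ (γ - p) := by
      rw [← Real.rpow_add ht₀pos]; congr 1; ring
    rw [h1]
    have := mul_pos (Real.rpow_pos_of_pos ht₀pos (p - q)) ht₀
    linarith
  filter_upwards [Ioo_mem_nhdsGT (div_pos hh hB)] with lam hlam
  have hcont : ContinuousOn (fun t : ℝ => A * t ^ (p - q) - F * t ^ (γ - q)) (Icc 0 t₀) :=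
    (((Real.continuous_rpow_const (by linarith)).const_mul A).sub
      ((Real.continuous_rpow_const (by linarith)).const_mul F)).continuousOn
  have h0 : A * (0 : ℝ) ^ (p - q) - F * (0 : ℝ) ^ (γ - q) = 0 := by
    rw [Real.zero_rpow (by linarith), Real.zero_rpow (by linarith)]; ring
  have hmem : lam * B ∈ Ioo (A * (0 : ℝ) ^ (p - q) - F * (0 : ℝ) ^ (γ - q))
      (A * t₀ ^ (p - q) - F * t₀ ^ (γ - q)) := by
    rw [h0]
    exact ⟨mul_pos hlam.1 hB, (lt_div_iff₀ hB).1 hlam.2⟩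
  obtain ⟨t, ht, hteq⟩ := intermediate_value_Ioo ht₀pos.le hcont hmem
  exact ⟨t, ht.1, ht.2.trans ht₀ε, hteq⟩

/-- At a critical point `t`, the normalized energy depends only on `u = t ^ (γ - p)`: both
numerator and denominator carry a factor `t ^ p`, which cancels. -/
theorem phi_div_eq (p q γ A B F lam t : ℝ) (hqp : q < p) (hB : 0 < B) (hlam : 0 < lam)
    (ht : 0 < t) (hcrit : A * t ^ (p - q) - F * t ^ (γ - q) = lam * B) :
    phi p q γ A B F lam t / lam ^ (p / (p - q)) =
      (A / p - (A - F * t ^ (γ - p)) / q - F / γ * t ^ (γ - p)) /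
        ((A - F * t ^ (γ - p)) / B) ^ (p / (p - q)) := by
  have hpq : p - q ≠ 0 := by linarith
  have hs : 0 < t ^ (p - q) := Real.rpow_pos_of_pos ht _
  have htp : 0 < t ^ p := Real.rpow_pos_of_pos ht _
  have h1 : t ^ (γ - q) = t ^ (p - q) * t ^ (γ - p) := by
    rw [← Real.rpow_add ht]; congr 1; ring
  have h2 : t ^ p = t ^ (p - q) * t ^ q := by
    rw [← Real.rpow_add ht]; congr 1; ring
  have h3 : t ^ γ = t ^ p * t ^ (γ - p) := by
    rw [← Real.rpow_add ht]; congr 1; ring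
  have hc : lam * B = t ^ (p - q) * (A - F * t ^ (γ - p)) := by
    rw [← hcrit, h1]; ring
  have hpos : 0 < A - F * t ^ (γ - p) := by
    have := mul_pos hlam hB
    rw [hc] at this
    exact (mul_pos_iff_of_pos_left hs).1 this
  have hl : lam = t ^ (p - q) * ((A - F * t ^ (γ - p)) / B) := by
    rw [← mul_div_assoc, ← hc]; field_simp
  have hden : lam ^ (p / (p - q)) =
      t ^ p * ((A - F * t ^ (γ - p)) / B) ^ (p / (p - q)) := by
    conv_lhs => rw [hl]
    rw [Real.mul_rpow hs.le (div_pos hpos hB).le, ← Real.rpow_mul ht.le, mul_div_cancel₀ _ hpq]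
  have hnum : phi p q γ A B F lam t =
      t ^ p * (A / p - (A - F * t ^ (γ - p)) / q - F / γ * t ^ (γ - p)) := by
    unfold phi
    have : lam * B / q * t ^ q = t ^ p * ((A - F * t ^ (γ - p)) / q) := by
      rw [hc, h2]; ring
    rw [this, h3]; ring
  rw [hnum, hden, mul_div_mul_left _ _ htp.ne']

/-- if, for each admissible `λ > 0` (every `λ > 0` when `F ≤ 0`, and
`λ ∈ (0, Λ(A,B,F))` when `F > 0`), `t⁺_λ` is the smallest critical point of `φ_λ` in
`(0,∞)`, then `φ_λ(t⁺_λ)/λ^{p/(p−q)} → (1/p − 1/q) B^{p/(p−q)} A^{−q/(p−q)}` as `λ ↓ 0`. -/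
theorem smallest_critical_value_asymptotics (p q γ A B F : ℝ)
    (hq : 1 < q) (hqp : q < p) (hpγ : p < γ)
    (hA : 0 < A) (hB : 0 < B)
    (tplus : ℝ → ℝ)
    (htp : ∀ lam : ℝ, 0 < lam → (0 < F → lam < Lam p q γ A B F) →
      0 < tplus lam ∧ deriv (phi p q γ A B F lam) (tplus lam) = 0 ∧
      ∀ t : ℝ, 0 < t → deriv (phi p q γ A B F lam) t = 0 → tplus lam ≤ t) :
    Filter.Tendsto (fun lam => phi p q γ A B F lam (tplus lam) / lam ^ (p / (p - q)))
      (𝓝[>] (0 : ℝ))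
      (𝓝 ((1 / p - 1 / q) * B ^ (p / (p - q)) * A ^ (-q / (p - q)))) := by
  have hp0 : p ≠ 0 := by linarith
  have hq0 : q ≠ 0 := by linarith
  have hγ0 : γ ≠ 0 := by linarith
  have hadm : ∀ᶠ lam in 𝓝[>] (0 : ℝ), 0 < lam ∧ (0 < F → lam < Lam p q γ A B F) := by
    by_cases hF : 0 < F
    · have hL : 0 < Lam p q γ A B F := by
        unfold Lam
        have h1 : 0 < γ - p := by linarith
        have h2 : 0 < γ - q := by linarith
        have h3 : 0 < p - q := by linarith
        positivity
      filter_upwards [Ioo_mem_nhdsGT hL] with lam hlam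
      exact ⟨hlam.1, fun _ => hlam.2⟩
    · filter_upwards [self_mem_nhdsWithin] with lam hlam
      exact ⟨hlam, fun h => absurd h hF⟩
  have htend : Tendsto tplus (𝓝[>] 0) (𝓝[>] 0) := by
    refine tendsto_nhdsWithin_iff.2 ⟨tendsto_order.2 ⟨fun a ha => ?_, fun ε hε => ?_⟩, ?_⟩
    · filter_upwards [hadm] with lam hlam
      exact ha.trans (htp lam hlam.1 hlam.2).1
    · filter_upwards [hadm, exists_small_critical p q γ A B F hqp hpγ hA hB ε hε]
        with lam hlam ⟨t, ht, htε, hcrit⟩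
      exact ((htp lam hlam.1 hlam.2).2.2 t ht
        ((deriv_phi_eq_zero_iff p q γ A B F lam t hp0 hq0 hγ0 ht).2 hcrit)).trans_lt htε
    · filter_upwards [hadm] with lam hlam
      exact (htp lam hlam.1 hlam.2).1
  have hu : Tendsto (fun lam => tplus lam ^ (γ - p)) (𝓝[>] 0) (𝓝 0) :=
    (tendsto_rpow_nhdsGT_zero (sub_pos.2 hpγ)).comp htend
  have hAF : Tendsto (fun lam => A - F * tplus lam ^ (γ - p)) (𝓝[>] 0) (𝓝 (A - F * 0)) :=
    (hu.const_mul F).const_sub A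
  have hAB : 0 < (A - F * 0) / B := by simpa using div_pos hA hB
  have hlim := (((hAF.div_const q).const_sub (A / p)).sub (hu.const_mul (F / γ))).div
    ((hAF.div_const B).rpow_const (p := p / (p - q)) (Or.inl hAB.ne'))
    (Real.rpow_pos_of_pos hAB _).ne'
  have hval : (A / p - (A - F * 0) / q - F / γ * 0) / ((A - F * 0) / B) ^ (p / (p - q)) =
      (1 / p - 1 / q) * B ^ (p / (p - q)) * A ^ (-q / (p - q)) := by
    have hpq : p - q ≠ 0 := by linarith
    have hexp : A ^ (-q / (p - q)) = A / A ^ (p / (p - q)) := by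
      have : -q / (p - q) = 1 - p / (p - q) := by field_simp; ring
      rw [this, Real.rpow_sub hA, Real.rpow_one]
    simp only [mul_zero, sub_zero]
    rw [hexp, Real.div_rpow hA.le hB.le, div_div_eq_mul_div]
    ring
  rw [hval] at hlim
  refine hlim.congr' ?_
  filter_upwards [hadm] with lam hlam
  obtain ⟨ht, hcrit, -⟩ := htp lam hlam.1 hlam.2
  exact (phi_div_eq p q γ A B F lam _ hqp hB hlam.1 ht
    ((deriv_phi_eq_zero_iff p q γ A B F lam _ hp0 hq0 hγ0 ht).1 hcrit)).symm
end
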